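/- Let A = {a_1,...,a_n} ⊂ ℕ^d with all a_i ∈ ℕ^d. Then the open toric cube C = f_A((0,1)^d) with dim(C) = k is semi-algebraically homeomorphic to the open cube (0,1)^k. -/

import Mathlib

open MeasureTheory

/-- The monomial map `f_A`. -/
def monomialMap {d n : ℕ} (a : Fin n → Fin d → ℕ) (t : Fin d → ℝ) : Fin n → ℝ :=
  fun i => ∏ j, t j ^ a i j

/-- The open unit cube `(0,1)^d`. -/
def openUnitCube (d : ℕ) : Set (Fin d → ℝ) := Set.pi Set.univ fun _ => Set.Ioo (0 : ℝ) 1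

/-- Semialgebraic subsets of `ℝ^ι`: the Boolean algebra generated by sets of the form
`{x | p(x) > 0}` for real polynomials `p`. -/
inductive IsSemialgebraic {ι : Type} [Fintype ι] : Set (ι → ℝ) → Prop
  | pos (p : MvPolynomial ι ℝ) : IsSemialgebraic {x | 0 < MvPolynomial.eval x p}
  | compl {s : Set (ι → ℝ)} : IsSemialgebraic s → IsSemialgebraic sᶜ
  | union {s t : Set (ι → ℝ)} :
      IsSemialgebraic s → IsSemialgebraic t → IsSemialgebraic (s ∪ t)

/-! Coordinatewise `-log` turns the toric cube into the open cone `K` of positive combinations of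
the exponent vectors. By Fourier–Motzkin elimination `K` is cut out of its span `V` by finitely many
strict inequalities between integral linear forms; a linear form with integer coefficients pulls
back under `-log` to the logarithm of a Laurent monomial. Unless `K = V`, let `e` be the sum of the
exponent vectors and `ρ x` the largest `r` with `x - r • e` in the closure of `K`. Then `ρ` together
with `dim V - 1` independent integral forms vanishing at `e` is a homeomorphism from `K` onto
`(0,∞) × ℝ^(dim V - 1)`, which `exp (-·)` and sigmoid functions carry onto the open cube. The
inverses of these functions are logarithms of rational functions, so each condition defining the
graph compares logarithms of rational functions and is therefore a polynomial condition. -/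

section Semialgebraic

variable {ι : Type} {κ : Type*}

namespace IsSemialgebraic

variable [Fintype ι] {s t D : Set (ι → ℝ)} {P Q : (ι → ℝ) → Prop}

theorem inter (hs : IsSemialgebraic s) (ht : IsSemialgebraic t) : IsSemialgebraic (s ∩ t) := by
  simpa only [Set.compl_union, compl_compl] using (hs.compl.union ht.compl).compl

theorem sep_and (hP : IsSemialgebraic {z ∈ D | P z}) (hQ : IsSemialgebraic {z ∈ D | Q z}) :
    IsSemialgebraic {z ∈ D | P z ∧ Q z} := by
  simpa only [Set.sep_and] using hP.inter hQ

theorem sep_not (hD : IsSemialgebraic D) (hP : IsSemialgebraic {z ∈ D | P z}) :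
    IsSemialgebraic {z ∈ D | ¬P z} := by
  convert hD.inter hP.compl using 1
  ext z
  simp +contextual

theorem sep_forall (hD : IsSemialgebraic D) (F : Finset κ) {R : κ → (ι → ℝ) → Prop}
    (hR : ∀ k ∈ F, IsSemialgebraic {z ∈ D | R k z}) :
    IsSemialgebraic {z ∈ D | ∀ k ∈ F, R k z} := by
  classical
  induction F using Finset.induction_on with
  | empty => simpa using hD
  | insert k F _ ih =>
    simp only [Finset.forall_mem_insert] at hR ⊢
    exact hR.1.sep_and (ih hR.2)

theorem sep_exists (hD : IsSemialgebraic D) (F : Finset κ) {R : κ → (ι → ℝ) → Prop}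
    (hR : ∀ k ∈ F, IsSemialgebraic {z ∈ D | R k z}) :
    IsSemialgebraic {z ∈ D | ∃ k ∈ F, R k z} := by
  simpa only [not_forall, not_not, exists_prop] using
    hD.sep_not (hD.sep_forall F fun k hk => hD.sep_not (hR k hk))

theorem setOf_forall_pos (F : Finset κ) (p : κ → MvPolynomial ι ℝ) :
    IsSemialgebraic {z | ∀ k ∈ F, 0 < (p k).eval z} := by
  have huniv : IsSemialgebraic (Set.univ : Set (ι → ℝ)) := by
    simpa using IsSemialgebraic.pos (1 : MvPolynomial ι ℝ)
  simpa using huniv.sep_forall F fun k _ => huniv.inter (.pos (p k))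

end IsSemialgebraic

/-- The additive group of the functions that equal `log p - log q` on `D` for some polynomials `p`
and `q` positive on `D`; their sign conditions are polynomial inequalities on `D`. -/
def logRatio (D : Set (ι → ℝ)) : AddSubgroup ((ι → ℝ) → ℝ) where
  carrier := {ψ | ∃ p q : MvPolynomial ι ℝ, ∀ z ∈ D,
    0 < p.eval z ∧ 0 < q.eval z ∧ ψ z = Real.log (p.eval z) - Real.log (q.eval z)}
  zero_mem' := ⟨1, 1, by simp⟩
  add_mem' := by
    rintro ψ₁ ψ₂ ⟨p₁, q₁, h₁⟩ ⟨p₂, q₂, h₂⟩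
    refine ⟨p₁ * p₂, q₁ * q₂, fun z hz => ?_⟩
    obtain ⟨hp₁, hq₁, hψ₁⟩ := h₁ z hz
    obtain ⟨hp₂, hq₂, hψ₂⟩ := h₂ z hz
    simp only [map_mul, Pi.add_apply, Real.log_mul hp₁.ne' hp₂.ne', Real.log_mul hq₁.ne' hq₂.ne']
    exact ⟨mul_pos hp₁ hp₂, mul_pos hq₁ hq₂, by linarith⟩
  neg_mem' := by
    rintro ψ ⟨p, q, h⟩
    exact ⟨q, p, fun z hz => ⟨(h z hz).2.1, (h z hz).1, by simp [(h z hz).2.2]⟩⟩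

variable {D : Set (ι → ℝ)} {ψ₁ ψ₂ : (ι → ℝ) → ℝ}

theorem log_eval_mem_logRatio (p : MvPolynomial ι ℝ) (hp : ∀ z ∈ D, 0 < p.eval z) :
    (fun z => Real.log (p.eval z)) ∈ logRatio D :=
  ⟨p, 1, fun z hz => ⟨hp z hz, by simp⟩⟩

namespace IsSemialgebraic

variable [Fintype ι]

theorem sep_lt (hD : IsSemialgebraic D) (hψ₁ : ψ₁ ∈ logRatio D) (hψ₂ : ψ₂ ∈ logRatio D) :
    IsSemialgebraic {z ∈ D | ψ₁ z < ψ₂ z} := by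
  obtain ⟨p, q, h⟩ := sub_mem hψ₂ hψ₁
  convert hD.inter (.pos (p - q)) using 1
  ext z
  refine and_congr_right fun hz => ?_
  obtain ⟨hp, hq, hψz⟩ := h z hz
  rw [← sub_pos, ← Pi.sub_apply, hψz]
  simp [Real.log_lt_log_iff hq hp]

theorem sep_le (hD : IsSemialgebraic D) (hψ₁ : ψ₁ ∈ logRatio D) (hψ₂ : ψ₂ ∈ logRatio D) :
    IsSemialgebraic {z ∈ D | ψ₁ z ≤ ψ₂ z} := by
  simpa only [not_lt] using hD.sep_not (hD.sep_lt hψ₂ hψ₁)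

theorem sep_eq (hD : IsSemialgebraic D) (hψ₁ : ψ₁ ∈ logRatio D) (hψ₂ : ψ₂ ∈ logRatio D) :
    IsSemialgebraic {z ∈ D | ψ₁ z = ψ₂ z} := by
  simpa only [le_antisymm_iff] using (hD.sep_le hψ₁ hψ₂).sep_and (hD.sep_le hψ₂ hψ₁)

end IsSemialgebraic

end Semialgebraic

section IntegralForms

/-- The linear forms on `𝕜^ι` with integer coefficients. -/
def integralForms (𝕜 ι : Type*) [CommRing 𝕜] : AddSubgroup (Module.Dual 𝕜 (ι → 𝕜)) :=
  AddSubgroup.closure (Set.range LinearMap.proj)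

/-- The vectors of `𝕜^ι` with integer coordinates. -/
def integralVectors (𝕜 ι : Type*) [CommRing 𝕜] : AddSubgroup (ι → 𝕜) :=
  AddSubgroup.pi Set.univ fun _ => (Int.castAddHom 𝕜).range

variable {𝕜 ι σ : Type*} [CommRing 𝕜] {φ : Module.Dual 𝕜 (ι → 𝕜)} {v : ι → 𝕜}

theorem proj_mem_integralForms (i : ι) :
    (LinearMap.proj i : Module.Dual 𝕜 (ι → 𝕜)) ∈ integralForms 𝕜 ι :=
  AddSubgroup.subset_closure ⟨i, rfl⟩

theorem mem_integralVectors : v ∈ integralVectors 𝕜 ι ↔ ∀ i, ∃ m : ℤ, (m : 𝕜) = v i := by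
  simp only [integralVectors, AddSubgroup.mem_pi, Set.mem_univ, forall_const,
    AddMonoidHom.mem_range, Int.coe_castAddHom]

theorem apply_comp_mem_of_mem_integralForms (hφ : φ ∈ integralForms 𝕜 ι) {G : AddSubgroup (σ → 𝕜)}
    {x : σ → ι → 𝕜} (hx : ∀ i, (fun s => x s i) ∈ G) : (fun s => φ (x s)) ∈ G := by
  induction hφ using AddSubgroup.closure_induction with
  | mem φ hφ =>
    obtain ⟨i, rfl⟩ := hφ
    exact hx i
  | zero => exact zero_mem G
  | add φ μ _ _ hφ hμ => exact add_mem hφ hμ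
  | neg φ _ hφ => exact neg_mem hφ

theorem exists_intCast_eq_apply (hφ : φ ∈ integralForms 𝕜 ι) (hv : v ∈ integralVectors 𝕜 ι) :
    ∃ m : ℤ, (m : 𝕜) = φ v := by
  rw [mem_integralVectors] at hv
  induction hφ using AddSubgroup.closure_induction with
  | mem φ hφ =>
    obtain ⟨i, rfl⟩ := hφ
    exact hv i
  | zero => exact ⟨0, by simp⟩
  | add φ μ _ _ hφ hμ =>
    obtain ⟨⟨m, hm⟩, l, hl⟩ := And.intro hφ hμ
    exact ⟨m + l, by simp [hm, hl]⟩
  | neg φ _ hφ =>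
    obtain ⟨m, hm⟩ := hφ
    exact ⟨-m, by simp [hm]⟩

theorem apply_smul_sub_apply_smul_mem_integralForms {μ : Module.Dual 𝕜 (ι → 𝕜)}
    (hφ : φ ∈ integralForms 𝕜 ι) (hμ : μ ∈ integralForms 𝕜 ι) (hv : v ∈ integralVectors 𝕜 ι) :
    φ v • μ - μ v • φ ∈ integralForms 𝕜 ι := by
  obtain ⟨m, hm⟩ := exists_intCast_eq_apply hφ hv
  obtain ⟨l, hl⟩ := exists_intCast_eq_apply hμ hv
  rw [← hm, ← hl, Int.cast_smul_eq_zsmul 𝕜 m μ, Int.cast_smul_eq_zsmul 𝕜 l φ]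
  exact sub_mem (zsmul_mem hμ m) (zsmul_mem hφ l)

end IntegralForms

section FourierMotzkin

variable {𝕜 E ι : Type*} [Field 𝕜] [LinearOrder 𝕜]

open Classical in
/-- The Fourier–Motzkin elimination of `t` from the inequalities `0 ≤ t` and `0 ≤ φ (x - t • v)`,
`φ ∈ M`: linear forms whose nonnegativity at `x` expresses that some `t` solves them. -/
noncomputable def fourierMotzkin [AddCommGroup E] [Module 𝕜 E] (M : Finset (Module.Dual 𝕜 E))
    (v : E) : Finset (Module.Dual 𝕜 E) :=
  {φ ∈ M | 0 ≤ φ v} ∪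
    ({φ ∈ M | 0 < φ v} ×ˢ {φ ∈ M | φ v < 0}).image fun p => p.1 v • p.2 - p.2 v • p.1

theorem forall_mem_fourierMotzkin [AddCommGroup E] [Module 𝕜 E] {M : Finset (Module.Dual 𝕜 E)}
    {v : E} {P : Module.Dual 𝕜 E → Prop} :
    (∀ φ ∈ fourierMotzkin M v, P φ) ↔
      (∀ φ ∈ M, 0 ≤ φ v → P φ) ∧
        ∀ φ ∈ M, 0 < φ v → ∀ μ ∈ M, μ v < 0 → P (φ v • μ - μ v • φ) := by
  simp only [fourierMotzkin, Finset.forall_mem_union, Finset.forall_mem_image, Finset.mem_filter,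
    Finset.mem_product, Prod.forall, and_imp]
  grind

theorem mem_integralForms_of_mem_fourierMotzkin {M : Finset (Module.Dual 𝕜 (ι → 𝕜))}
    (hM : ∀ φ ∈ M, φ ∈ integralForms 𝕜 ι) {v : ι → 𝕜} (hv : v ∈ integralVectors 𝕜 ι) :
    ∀ φ ∈ fourierMotzkin M v, φ ∈ integralForms 𝕜 ι :=
  forall_mem_fourierMotzkin.2 ⟨fun φ hφ _ => hM φ hφ, fun φ hφ _ μ hμ _ =>
    apply_smul_sub_apply_smul_mem_integralForms (hM φ hφ) (hM μ hμ) hv⟩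

variable [IsStrictOrderedRing 𝕜]

theorem forall_mem_fourierMotzkin_nonneg_iff [AddCommGroup E] [Module 𝕜 E]
    {M : Finset (Module.Dual 𝕜 E)} {v x : E} :
    (∀ φ ∈ fourierMotzkin M v, 0 ≤ φ x) ↔ ∃ t : 𝕜, 0 ≤ t ∧ ∀ φ ∈ M, 0 ≤ φ (x - t • v) := by
  classical
  simp only [forall_mem_fourierMotzkin, LinearMap.sub_apply, LinearMap.smul_apply, map_sub,
    map_smul, smul_eq_mul, sub_nonneg]
  constructor
  · rintro ⟨hnonneg, hpair⟩
    -- The least admissible `t` is the largest of the lower bounds imposed on it.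
    let L : Finset 𝕜 := insert 0 ({φ ∈ M | φ v < 0}.image fun φ => φ x / φ v)
    have hL : L.Nonempty := Finset.insert_nonempty _ _
    refine ⟨L.max' hL, L.le_max' 0 (Finset.mem_insert_self _ _), fun φ hφ => ?_⟩
    rcases lt_or_ge (φ v) 0 with hφv | hφv
    · have : φ x / φ v ≤ L.max' hL := L.le_max' _ <|
        Finset.mem_insert_of_mem <| Finset.mem_image_of_mem _ (by simp [hφ, hφv])
      rwa [div_le_iff_of_neg hφv] at this
    · have hmax := L.max'_mem hL
      generalize L.max' hL = t at hmax ⊢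
      simp only [L, Finset.mem_insert, Finset.mem_image, Finset.mem_filter] at hmax
      rcases hmax with rfl | ⟨μ, ⟨hμ, hμv⟩, rfl⟩
      · simpa using hnonneg φ hφ hφv
      · rcases hφv.eq_or_lt with hφv | hφv
        · simpa [← hφv] using hnonneg φ hφ hφv.le
        · rw [div_mul_eq_mul_div, div_le_iff_of_neg hμv]
          linarith [hpair φ hφ hφv μ hμ hμv]
  · rintro ⟨t, ht, htM⟩
    refine ⟨fun φ hφ hφv => (mul_nonneg ht hφv).trans (htM φ hφ), fun φ hφ hφv μ hμ hμv => ?_⟩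
    linarith [mul_le_mul_of_nonneg_left (htM μ hμ) hφv.le,
      mul_le_mul_of_nonpos_left (htM φ hφ) hμv.le]

theorem mem_hull_insert_iff [AddCommGroup E] [Module 𝕜 E] {S : Set E} {v x : E} :
    x ∈ PointedCone.hull 𝕜 (insert v S) ↔
      ∃ t : 𝕜, 0 ≤ t ∧ x - t • v ∈ PointedCone.hull 𝕜 S := by
  simp only [PointedCone.hull, Submodule.mem_span_insert, Subtype.exists]
  constructor
  · rintro ⟨t, ht, y, hy, rfl⟩
    exact ⟨t, ht, by simpa [Nonneg.mk_smul] using hy⟩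
  · rintro ⟨t, ht, hx⟩
    exact ⟨t, ht, _, hx, by simp⟩

theorem exists_integralForms_mem_hull_iff [Finite ι] {S : Set (ι → 𝕜)} (hS : S.Finite)
    (hSint : S ⊆ integralVectors 𝕜 ι) :
    ∃ M : Finset (Module.Dual 𝕜 (ι → 𝕜)), (∀ φ ∈ M, φ ∈ integralForms 𝕜 ι) ∧
      ∀ x, x ∈ PointedCone.hull 𝕜 S ↔ ∀ φ ∈ M, 0 ≤ φ x := by
  classical
  have := Fintype.ofFinite ι
  induction S, hS using Set.Finite.induction_on with
  | empty =>
    refine ⟨Finset.univ.image LinearMap.proj ∪ Finset.univ.image fun i => -LinearMap.proj i,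
      ?_, fun x => ?_⟩
    · simp only [Finset.forall_mem_union, Finset.forall_mem_image, neg_mem_iff]
      exact ⟨fun i _ => proj_mem_integralForms i, fun i _ => proj_mem_integralForms i⟩
    · simp only [Finset.forall_mem_union, Finset.forall_mem_image, ← forall_and, PointedCone.hull,
        Submodule.span_empty, Submodule.mem_bot, funext_iff]
      simp [le_antisymm_iff, and_comm]
  | @insert v S _ _ ih =>
    obtain ⟨M, hMint, hM⟩ := ih ((Set.subset_insert _ _).trans hSint)
    refine ⟨fourierMotzkin M v,
      mem_integralForms_of_mem_fourierMotzkin hMint (hSint (Set.mem_insert _ _)), fun x => ?_⟩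
    simp only [mem_hull_insert_iff, hM, forall_mem_fourierMotzkin_nonneg_iff]

end FourierMotzkin

section OpenCone

/-- The positive linear combinations of a finite family `v`, i.e. the relative interior of the cone
spanned by `v`. -/
def openCone (𝕜 : Type*) {κ E : Type*} [Semiring 𝕜] [Preorder 𝕜] [Fintype κ] [AddCommMonoid E]
    [Module 𝕜 E] (v : κ → E) : Set E :=
  Fintype.linearCombination 𝕜 v '' Set.univ.pi fun _ => Set.Ioi 0

variable {𝕜 κ E ι : Type*} [Field 𝕜] [LinearOrder 𝕜] [Fintype κ]

theorem openCone_subset_span [AddCommGroup E] [Module 𝕜 E] (v : κ → E) :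
    openCone 𝕜 v ⊆ Submodule.span 𝕜 (Set.range v) := by
  rw [← Fintype.range_linearCombination 𝕜]
  exact Set.image_subset_range _ _

variable [IsStrictOrderedRing 𝕜]

theorem mem_hull_range_iff [AddCommGroup E] [Module 𝕜 E] {v : κ → E} {x : E} :
    x ∈ PointedCone.hull 𝕜 (Set.range v) ↔
      ∃ t : κ → 𝕜, (∀ j, 0 ≤ t j) ∧ Fintype.linearCombination 𝕜 v t = x := by
  rw [PointedCone.hull, Submodule.mem_span_range_iff_exists_fun]
  constructor
  · rintro ⟨t, rfl⟩
    exact ⟨fun j => t j, fun j => (t j).2, rfl⟩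
  · rintro ⟨t, ht, rfl⟩
    exact ⟨fun j => ⟨t j, ht j⟩, rfl⟩

theorem mem_openCone_iff_exists_sub_smul_mem_hull [AddCommGroup E] [Module 𝕜 E] {v : κ → E}
    {x : E} :
    x ∈ openCone 𝕜 v ↔ ∃ s : 𝕜, 0 < s ∧ x - s • ∑ j, v j ∈ PointedCone.hull 𝕜 (Set.range v) := by
  have hshift (t : κ → 𝕜) (s : 𝕜) : Fintype.linearCombination 𝕜 v (fun j => t j + s) =
      Fintype.linearCombination 𝕜 v t + s • ∑ j, v j := by
    simp [Fintype.linearCombination_apply, add_smul, Finset.sum_add_distrib, Finset.smul_sum]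
  simp only [mem_hull_range_iff, openCone, Set.mem_image, Set.mem_univ_pi, Set.mem_Ioi]
  constructor
  · rintro ⟨t, ht, rfl⟩
    obtain ⟨s, hs, hst⟩ := Pi.exists_forall_pos_add_lt ht
    refine ⟨s, hs, fun j => t j - s, fun j => ?_, ?_⟩
    · linarith [hst j]
    · rw [eq_sub_iff_add_eq, ← hshift]
      simp
  · rintro ⟨s, hs, t, ht, hx⟩
    exact ⟨fun j => t j + s, fun j => add_pos_of_nonneg_of_pos (ht j) hs, by simp [hshift, hx]⟩

theorem apply_eq_zero_of_apply_sum_eq_zero [AddCommGroup E] [Module 𝕜 E] {v : κ → E}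
    {φ : Module.Dual 𝕜 E} (hφ : ∀ j, 0 ≤ φ (v j)) (hsum : φ (∑ j, v j) = 0) {x : E}
    (hx : x ∈ Submodule.span 𝕜 (Set.range v)) : φ x = 0 := by
  rw [map_sum, Finset.sum_eq_zero_iff_of_nonneg fun j _ => hφ j] at hsum
  refine LinearMap.eqOn_span (g := (0 : E →ₗ[𝕜] 𝕜)) ?_ hx
  rintro _ ⟨j, rfl⟩
  exact hsum j (Finset.mem_univ j)

theorem mem_span_range_iff_of_mem_hull_iff [AddCommGroup E] [Module 𝕜 E] {v : κ → E}
    {M : Finset (Module.Dual 𝕜 E)}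
    (hM : ∀ x, x ∈ PointedCone.hull 𝕜 (Set.range v) ↔ ∀ φ ∈ M, 0 ≤ φ x) {x : E} :
    x ∈ Submodule.span 𝕜 (Set.range v) ↔ ∀ φ ∈ M, φ (∑ j, v j) = 0 → φ x = 0 := by
  have hv (φ) (hφ : φ ∈ M) (j) : 0 ≤ φ (v j) :=
    (hM _).1 (PointedCone.subset_hull ⟨j, rfl⟩) φ hφ
  refine ⟨fun hx φ hφ hsum => apply_eq_zero_of_apply_sum_eq_zero (hv φ hφ) hsum hx, fun hx => ?_⟩
  obtain ⟨s, hs⟩ := (M.image fun φ => -φ x / φ (∑ j, v j)).exists_le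
  have hadd : x + s • ∑ j, v j ∈ PointedCone.hull 𝕜 (Set.range v) := by
    refine (hM _).2 fun φ hφ => ?_
    have hsum : 0 ≤ φ (∑ j, v j) :=
      (hM _).1 (sum_mem fun j _ => PointedCone.subset_hull ⟨j, rfl⟩) φ hφ
    rcases hsum.eq_or_lt with hsum | hsum
    · simp [← hsum, hx φ hφ hsum.symm]
    · have := hs _ (Finset.mem_image_of_mem _ hφ)
      rw [div_le_iff₀ hsum] at this
      rw [map_add, map_smul, smul_eq_mul]
      linarith
  rw [← add_sub_cancel_right x (s • ∑ j, v j)]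
  exact sub_mem (PointedCone.hull_le_span _ _ hadd) <| Submodule.smul_mem _ _ <|
    Submodule.sum_mem _ fun j _ => Submodule.subset_span ⟨j, rfl⟩

theorem openCone_eq_of_mem_hull_iff [AddCommGroup E] [Module 𝕜 E] {v : κ → E}
    {M : Finset (Module.Dual 𝕜 E)}
    (hM : ∀ x, x ∈ PointedCone.hull 𝕜 (Set.range v) ↔ ∀ φ ∈ M, 0 ≤ φ x) :
    openCone 𝕜 v = {x ∈ Submodule.span 𝕜 (Set.range v) |
      ∀ φ ∈ M, 0 < φ (∑ j, v j) → 0 < φ x} := by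
  have hv (φ) (hφ : φ ∈ M) (j) : 0 ≤ φ (v j) :=
    (hM _).1 (PointedCone.subset_hull ⟨j, rfl⟩) φ hφ
  ext x
  simp only [mem_openCone_iff_exists_sub_smul_mem_hull, hM, map_sub, map_smul, smul_eq_mul,
    sub_nonneg]
  constructor
  · rintro ⟨s, hs, hx⟩
    refine ⟨openCone_subset_span v <| mem_openCone_iff_exists_sub_smul_mem_hull.2
      ⟨s, hs, (hM _).2 fun φ hφ => by simpa using hx φ hφ⟩, fun φ hφ hφv => ?_⟩
    exact (mul_pos hs hφv).trans_le (hx φ hφ)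
  · rintro ⟨hspan, hpos⟩
    obtain ⟨s, hs, hsx⟩ := Pi.exists_forall_pos_add_lt
      fun φ : {φ : M // 0 < φ.1 (∑ j, v j)} => div_pos (hpos φ.1 φ.1.2 φ.2) φ.2
    refine ⟨s, hs, fun φ hφ => ?_⟩
    have hsum : 0 ≤ φ (∑ j, v j) :=
      (hM _).1 (sum_mem fun j _ => PointedCone.subset_hull ⟨j, rfl⟩) φ hφ
    rcases hsum.eq_or_lt with hsum | hsum
    · simp [← hsum, apply_eq_zero_of_apply_sum_eq_zero (hv φ hφ) hsum.symm hspan]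
    · have := hsx ⟨⟨φ, hφ⟩, hsum⟩
      rw [zero_add, lt_div_iff₀ hsum] at this
      exact this.le

theorem exists_integralForms_span_eq_openCone_eq [Finite ι] {v : κ → ι → 𝕜}
    (hv : ∀ j, v j ∈ integralVectors 𝕜 ι) :
    ∃ Z N : Finset (Module.Dual 𝕜 (ι → 𝕜)),
      (∀ φ ∈ Z, φ ∈ integralForms 𝕜 ι) ∧ (∀ φ ∈ N, φ ∈ integralForms 𝕜 ι) ∧
      (∀ φ ∈ N, 0 < φ (∑ j, v j)) ∧
      (Submodule.span 𝕜 (Set.range v) : Set (ι → 𝕜)) = {x | ∀ φ ∈ Z, φ x = 0} ∧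
      openCone 𝕜 v = {x ∈ Submodule.span 𝕜 (Set.range v) | ∀ φ ∈ N, 0 < φ x} := by
  obtain ⟨M, hMint, hM⟩ := exists_integralForms_mem_hull_iff (Set.finite_range v)
    (Set.range_subset_iff.2 hv)
  refine ⟨{φ ∈ M | φ (∑ j, v j) = 0}, {φ ∈ M | 0 < φ (∑ j, v j)},
    fun φ hφ => hMint φ (Finset.mem_of_mem_filter φ hφ),
    fun φ hφ => hMint φ (Finset.mem_of_mem_filter φ hφ),
    fun φ hφ => (Finset.mem_filter.1 hφ).2, ?_, ?_⟩
  · ext x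
    simp [mem_span_range_iff_of_mem_hull_iff hM]
  · simp only [openCone_eq_of_mem_hull_iff hM, Finset.mem_filter, and_imp]

end OpenCone

section ConeDepth

variable {E : Type*} [AddCommGroup E] [Module ℝ E] {N : Finset (Module.Dual ℝ E)}
  (hN : N.Nonempty) {e : E}

/-- The depth of `x` in the cone `{x | ∀ φ ∈ N, 0 ≤ φ x}` in the direction of an interior
point `e`: the largest `r` for which `x - r • e` lies in the cone. -/
noncomputable def coneDepth (e x : E) : ℝ :=
  N.inf' hN fun φ => φ x / φ e

theorem continuous_coneDepth [TopologicalSpace E] [IsTopologicalAddGroup E] [ContinuousSMul ℝ E]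
    [T2Space E] [FiniteDimensional ℝ E] : Continuous (coneDepth hN e) :=
  Continuous.finset_inf'_apply hN fun φ _ => φ.continuous_of_finiteDimensional.div_const _

variable (he : ∀ φ ∈ N, 0 < φ e)
include he

theorem coneDepth_pos_iff {x : E} : 0 < coneDepth hN e x ↔ ∀ φ ∈ N, 0 < φ x := by
  rw [coneDepth, Finset.lt_inf'_iff]
  exact forall₂_congr fun φ hφ => div_pos_iff_of_pos_right (he φ hφ)

theorem coneDepth_add_smul (x : E) (r : ℝ) : coneDepth hN e (x + r • e) = coneDepth hN e x + r := by
  have hshift : ∀ φ ∈ N, φ (x + r • e) / φ e = φ x / φ e + r := fun φ hφ => by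
    rw [map_add, map_smul, smul_eq_mul, add_div, mul_div_cancel_right₀ _ (he φ hφ).ne']
  rw [coneDepth, Finset.inf'_congr hN rfl hshift]
  exact (Finset.apply_inf'_eq_inf'_comp hN (· + r) fun a b => (min_add_add_right a b r).symm).symm

theorem eq_coneDepth_iff {x : E} {r : ℝ} :
    r = coneDepth hN e x ↔ (∀ φ ∈ N, r * φ e ≤ φ x) ∧ ∃ φ ∈ N, r * φ e = φ x := by
  have hle : r ≤ coneDepth hN e x ↔ ∀ φ ∈ N, r * φ e ≤ φ x := by
    rw [coneDepth, Finset.le_inf'_iff]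
    exact forall₂_congr fun φ hφ => le_div_iff₀ (he φ hφ)
  rw [← hle]
  constructor
  · rintro rfl
    obtain ⟨φ, hφ, hmin⟩ := Finset.exists_mem_eq_inf' hN fun φ : Module.Dual ℝ E => φ x / φ e
    exact ⟨le_rfl, φ, hφ, by rw [coneDepth, hmin, div_mul_cancel₀ _ (he φ hφ).ne']⟩
  · rintro ⟨hr, φ, hφ, hφx⟩
    refine hr.antisymm ((Finset.inf'_le _ hφ).trans_eq ?_)
    rw [← hφx, mul_div_cancel_right₀ _ (he φ hφ).ne']

end ConeDepth

section IntegralCoordinates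

variable {K V ι : Type*} [Field K]

theorem exists_fin_pi_surjective_apply_eq_zero_iff [AddCommGroup V] [Module K V]
    [FiniteDimensional K V] (s : Set (Module.Dual K V)) :
    ∃ (m : ℕ) (f : Fin m → Module.Dual K V), (∀ i, f i ∈ s) ∧
      Function.Surjective (LinearMap.pi f) ∧ ∀ x, LinearMap.pi f x = 0 ↔ ∀ φ ∈ s, φ x = 0 := by
  obtain ⟨f, hfs, hspan, -⟩ := Submodule.exists_fun_fin_finrank_span_eq K s
  have hcoann := Submodule.coe_dualCoannihilator_span (R := K) s
  have hker : LinearMap.ker (LinearMap.pi f) = (Submodule.span K s).dualCoannihilator := by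
    refine .trans ?_ (congrArg Submodule.dualCoannihilator hspan)
    rw [SetLike.ext'_iff, Submodule.coe_dualCoannihilator_span]
    ext x
    simp [funext_iff]
  refine ⟨_, f, hfs, ?_, fun x => ?_⟩
  · rw [← LinearMap.range_eq_top]
    apply Submodule.eq_top_of_finrank_eq
    have hrank := (LinearMap.pi f).finrank_range_add_finrank_ker
    rw [hker, ← Subspace.finrank_add_finrank_dualCoannihilator_eq (Submodule.span K s)] at hrank
    simpa using hrank
  · rw [← LinearMap.mem_ker, hker, ← SetLike.mem_coe, hcoann, Set.mem_ofPred_eq]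

theorem mem_span_singleton_of_forall_integralForms {e x : ι → K} (he : e ∈ integralVectors K ι)
    (hx : ∀ φ ∈ integralForms K ι, φ e = 0 → φ x = 0) : x ∈ Submodule.span K {e} := by
  rw [Submodule.mem_span_singleton]
  by_cases h : ∃ i, e i ≠ 0
  · obtain ⟨i, hi⟩ := h
    refine ⟨x i / e i, funext fun j => ?_⟩
    have hminor := hx _ (apply_smul_sub_apply_smul_mem_integralForms
      (proj_mem_integralForms i) (proj_mem_integralForms j) he) (by simp [mul_comm])
    have : e i * x j - e j * x i = 0 := by simpa using hminor
    rw [Pi.smul_apply, smul_eq_mul, div_mul_eq_mul_div, div_eq_iff hi]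
    linear_combination -this
  · push Not at h
    exact ⟨0, funext fun j => by simpa using (hx _ (proj_mem_integralForms j) (h j)).symm⟩

theorem exists_integralForms_pi_surjective_ker_eq_span_singleton [Finite ι]
    {V : Submodule K (ι → K)} {e : V} (he : (e : ι → K) ∈ integralVectors K ι) :
    ∃ (m : ℕ) (p : Fin m → Module.Dual K (ι → K)), (∀ j, p j ∈ integralForms K ι) ∧
      m + Module.finrank K (Submodule.span K {e}) = Module.finrank K V ∧
      Function.Surjective (LinearMap.pi p ∘ₗ V.subtype) ∧
      LinearMap.ker (LinearMap.pi p ∘ₗ V.subtype) = Submodule.span K {e} := by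
  obtain ⟨m, f, hf, hsurj, hker⟩ := exists_fin_pi_surjective_apply_eq_zero_iff
    ((fun φ => φ ∘ₗ V.subtype) '' {φ | φ ∈ integralForms K ι ∧ φ e = 0})
  choose p hp hpf using hf
  obtain rfl : (fun j => p j ∘ₗ V.subtype) = f := funext hpf
  change Function.Surjective (LinearMap.pi p ∘ₗ V.subtype) at hsurj
  have hker_eq : LinearMap.ker (LinearMap.pi p ∘ₗ V.subtype) = Submodule.span K {e} := by
    refine le_antisymm (fun x hx => ?_) ?_
    · have hxe := mem_span_singleton_of_forall_integralForms he fun φ hφ hφe =>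
        (hker x).1 hx _ ⟨φ, ⟨hφ, hφe⟩, rfl⟩
      simpa [Submodule.mem_span_singleton, Subtype.ext_iff] using hxe
    · rw [Submodule.span_singleton_le_iff_mem, LinearMap.mem_ker]
      exact funext fun j => (hp j).2
  refine ⟨m, p, fun j => (hp j).1, ?_, hsurj, hker_eq⟩
  have hrank := (LinearMap.pi p ∘ₗ V.subtype).finrank_range_add_finrank_ker
  rw [hker_eq, LinearMap.range_eq_top.2 hsurj] at hrank
  simpa using hrank

end IntegralCoordinates

section HomeoOn

/-- `f` maps `S` homeomorphically onto `T`, with inverse `g`. -/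
structure IsHomeoOn {X Y : Type*} [TopologicalSpace X] [TopologicalSpace Y] (f : X → Y) (g : Y → X)
    (S : Set X) (T : Set Y) : Prop where
  mapsTo : Set.MapsTo f S T
  mapsTo_symm : Set.MapsTo g T S
  invOn : Set.InvOn g f S T
  continuousOn : ContinuousOn f S
  continuousOn_symm : ContinuousOn g T

namespace IsHomeoOn

variable {X Y Z : Type*} [TopologicalSpace X] [TopologicalSpace Y] [TopologicalSpace Z]
  {f : X → Y} {g : Y → X} {S : Set X} {T : Set Y}

theorem image_eq (h : IsHomeoOn f g S T) : f '' S = T :=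
  (h.invOn.bijOn h.mapsTo h.mapsTo_symm).image_eq

theorem symm (h : IsHomeoOn f g S T) : IsHomeoOn g f T S :=
  ⟨h.mapsTo_symm, h.mapsTo, h.invOn.symm, h.continuousOn_symm, h.continuousOn⟩

theorem trans {f' : Y → Z} {g' : Z → Y} {U : Set Z} (h : IsHomeoOn f g S T)
    (h' : IsHomeoOn f' g' T U) : IsHomeoOn (f' ∘ f) (g ∘ g') S U :=
  ⟨h'.mapsTo.comp h.mapsTo, h.mapsTo_symm.comp h'.mapsTo_symm,
    h.invOn.comp h'.invOn h.mapsTo h'.mapsTo_symm,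
    h'.continuousOn.comp h.continuousOn h.mapsTo,
    h.continuousOn_symm.comp h'.continuousOn_symm h'.mapsTo_symm⟩

theorem eq_iff (h : IsHomeoOn f g S T) {x : X} {y : Y} (hx : x ∈ S) (hy : y ∈ T) :
    y = f x ↔ g y = x :=
  ⟨fun hyx => hyx ▸ h.invOn.1 hx, fun hyx => hyx ▸ (h.invOn.2 hy).symm⟩

theorem restrict (h : IsHomeoOn f g S T) {S' : Set X} (hS' : S' ⊆ S) :
    IsHomeoOn f g S' (f '' S') where
  mapsTo := Set.mapsTo_image f S'
  mapsTo_symm := by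
    rintro _ ⟨x, hx, rfl⟩
    rwa [h.invOn.1 (hS' hx)]
  invOn := h.invOn.mono hS' (h.mapsTo.mono_left hS').image_subset
  continuousOn := h.continuousOn.mono hS'
  continuousOn_symm := h.continuousOn_symm.mono (h.mapsTo.mono_left hS').image_subset

theorem pi {κ : Type*} {X Y : κ → Type*} [∀ j, TopologicalSpace (X j)]
    [∀ j, TopologicalSpace (Y j)] {f : ∀ j, X j → Y j} {g : ∀ j, Y j → X j} {S : ∀ j, Set (X j)}
    {T : ∀ j, Set (Y j)} (h : ∀ j, IsHomeoOn (f j) (g j) (S j) (T j)) :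
    IsHomeoOn (fun x j => f j (x j)) (fun y j => g j (y j)) (Set.univ.pi S) (Set.univ.pi T) where
  mapsTo _ hx j hj := (h j).mapsTo (hx j hj)
  mapsTo_symm _ hy j hj := (h j).mapsTo_symm (hy j hj)
  invOn := ⟨fun _ hx => funext fun j => (h j).invOn.1 (hx j trivial),
    fun _ hy => funext fun j => (h j).invOn.2 (hy j trivial)⟩
  continuousOn := continuousOn_pi.2 fun j =>
    (h j).continuousOn.comp (continuous_apply j).continuousOn fun _ hx => hx j trivial
  continuousOn_symm := continuousOn_pi.2 fun j =>
    (h j).continuousOn_symm.comp (continuous_apply j).continuousOn fun _ hy => hy j trivial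

end IsHomeoOn

/-- The inverse of the sigmoid function. -/
noncomputable def logit (w : ℝ) : ℝ :=
  Real.log w - Real.log (1 - w)

theorem isHomeoOn_sigmoid_logit : IsHomeoOn Real.sigmoid logit Set.univ (Set.Ioo 0 1) where
  mapsTo x _ := ⟨Real.sigmoid_pos x, Real.sigmoid_lt_one x⟩
  mapsTo_symm _ _ := trivial
  invOn := by
    constructor
    · intro x _
      have hpos := Real.sigmoid_pos x
      rw [logit, ← Real.sigmoid_neg, ← Real.sigmoid_mul_rexp_neg,
        Real.log_mul hpos.ne' (Real.exp_pos _).ne', Real.log_exp]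
      ring
    · rintro w ⟨hw₀, hw₁⟩
      rw [logit, Real.sigmoid_def, neg_sub, Real.exp_sub, Real.exp_log hw₀,
        Real.exp_log (sub_pos.2 hw₁)]
      field_simp
      ring
  continuousOn := continuous_sigmoid.continuousOn
  continuousOn_symm := by
    refine ContinuousOn.sub ?_ ?_
    · exact Real.continuousOn_log.mono fun w hw => hw.1.ne'
    · exact (continuousOn_const.sub continuousOn_id).log fun w hw => (sub_pos.2 hw.2).ne'

theorem isHomeoOn_exp_neg_univ :
    IsHomeoOn (fun x => Real.exp (-x)) (fun w => -Real.log w) Set.univ (Set.Ioi 0) where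
  mapsTo x _ := Real.exp_pos _
  mapsTo_symm _ _ := trivial
  invOn := ⟨fun x _ => by simp, fun w hw => by simp [Real.exp_log hw.out]⟩
  continuousOn := by fun_prop
  continuousOn_symm := (Real.continuousOn_log.mono fun w hw => hw.out.ne').neg

theorem isHomeoOn_exp_neg_Ioi :
    IsHomeoOn (fun x => Real.exp (-x)) (fun w => -Real.log w) (Set.Ioi 0) (Set.Ioo 0 1) where
  mapsTo x hx := ⟨Real.exp_pos _, by simpa using hx⟩
  mapsTo_symm w hw := by simpa using Real.log_neg hw.1 hw.2
  invOn := isHomeoOn_exp_neg_univ.invOn.mono (Set.subset_univ _) Set.Ioo_subset_Ioi_self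
  continuousOn := isHomeoOn_exp_neg_univ.continuousOn.mono (Set.subset_univ _)
  continuousOn_symm := isHomeoOn_exp_neg_univ.continuousOn_symm.mono Set.Ioo_subset_Ioi_self

/-- Coordinatewise `exp (-·)`, which carries the open orthant onto the open unit cube. -/
noncomputable def expNeg {ι : Type*} (x : ι → ℝ) : ι → ℝ :=
  fun i => Real.exp (-x i)

/-- Coordinatewise `-log`, the inverse of `expNeg` on vectors with positive coordinates. -/
noncomputable def negLog {ι : Type*} (x : ι → ℝ) : ι → ℝ :=
  fun i => -Real.log (x i)

theorem isHomeoOn_expNeg_negLog (ι : Type*) :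
    IsHomeoOn (expNeg (ι := ι)) negLog Set.univ (Set.univ.pi fun _ => Set.Ioi 0) :=
  Set.pi_univ (Set.univ : Set ι) ▸ IsHomeoOn.pi fun _ => isHomeoOn_exp_neg_univ

theorem expNeg_image_pi_Ioi (d : ℕ) :
    expNeg '' (Set.univ.pi fun _ : Fin d => Set.Ioi 0) = openUnitCube d :=
  (IsHomeoOn.pi fun _ => isHomeoOn_exp_neg_Ioi).image_eq

end HomeoOn

section Charts

variable {E : Type*} [AddCommGroup E] [Module ℝ E] [TopologicalSpace E] [IsTopologicalAddGroup E]
  [ContinuousSMul ℝ E] [T2Space E] [FiniteDimensional ℝ E] {V : Submodule ℝ E}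

theorem exists_isHomeoOn_of_ker_eq_bot {F : Type*} [AddCommGroup F] [Module ℝ F]
    [TopologicalSpace F] [IsTopologicalAddGroup F] [ContinuousSMul ℝ F] [T2Space F]
    [FiniteDimensional ℝ F] {L : E →ₗ[ℝ] F} (hsurj : Function.Surjective (L ∘ₗ V.subtype))
    (hker : LinearMap.ker (L ∘ₗ V.subtype) = ⊥) : ∃ g, IsHomeoOn L g V Set.univ := by
  let φ := LinearEquiv.ofBijective (L ∘ₗ V.subtype) ⟨LinearMap.ker_eq_bot.1 hker, hsurj⟩
  exact ⟨fun y => φ.symm y,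
    { mapsTo := fun _ _ => trivial
      mapsTo_symm := fun y _ => (φ.symm y).2
      invOn := ⟨fun x hx => congrArg Subtype.val (φ.symm_apply_apply ⟨x, hx⟩),
        fun y _ => φ.apply_symm_apply y⟩
      continuousOn := L.continuous_of_finiteDimensional.continuousOn
      continuousOn_symm :=
        (V.subtype ∘ₗ φ.symm.toLinearMap).continuous_of_finiteDimensional.continuousOn }⟩

theorem exists_isHomeoOn_cons {m : ℕ} {L : E →ₗ[ℝ] (Fin m → ℝ)} {e : V}
    (hsurj : Function.Surjective (L ∘ₗ V.subtype))
    (hker : LinearMap.ker (L ∘ₗ V.subtype) = Submodule.span ℝ {e}) {ρ : E → ℝ}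
    (hρ : Continuous ρ) (hadd : ∀ x (r : ℝ), ρ (x + r • (e : E)) = ρ x + r) :
    ∃ g, IsHomeoOn (fun x => (Fin.cons (ρ x) (L x) : Fin (m + 1) → ℝ)) g {x ∈ V | 0 < ρ x}
      (Set.univ.pi (Fin.cons (Set.Ioi 0) fun _ => Set.univ)) := by
  obtain ⟨τ, hτ⟩ := (L ∘ₗ V.subtype).exists_rightInverse_of_surjective
    (LinearMap.range_eq_top.2 hsurj)
  have hLτ (y) : L (τ y) = y := LinearMap.congr_fun hτ y
  have hLe : L e = 0 := by
    have : e ∈ LinearMap.ker (L ∘ₗ V.subtype) := hker ▸ Submodule.mem_span_singleton_self e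
    exact this
  let g (u : Fin (m + 1) → ℝ) : E := τ (Fin.tail u) + (u 0 - ρ (τ (Fin.tail u))) • (e : E)
  have hρg (u) : ρ (g u) = u 0 := by rw [hadd]; ring
  have hcont : Continuous fun u : Fin (m + 1) → ℝ => (τ (Fin.tail u) : E) :=
    (V.subtype ∘ₗ τ).continuous_of_finiteDimensional.comp
      (continuous_pi fun j => continuous_apply j.succ)
  refine ⟨g, ?_, ?_, ⟨?_, ?_⟩, Continuous.continuousOn ?_, Continuous.continuousOn ?_⟩
  · exact fun x hx j _ => Fin.cases hx.2 (fun _ => trivial) j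
  · exact fun u hu => ⟨V.add_mem (τ _).2 (V.smul_mem _ e.2), (hρg u).symm ▸ hu 0 trivial⟩
  · rintro x ⟨hxV, -⟩
    obtain ⟨r, hr⟩ : ∃ r : ℝ, r • e = ⟨x, hxV⟩ - τ (L x) := by
      rw [← Submodule.mem_span_singleton, ← hker, LinearMap.mem_ker]
      simp [hLτ]
    have hx : τ (L x) + r • (e : E) = x :=
      eq_sub_iff_add_eq'.1 (congrArg Subtype.val hr)
    have hρx : ρ x - ρ (τ (L x)) = r := by
      rw [sub_eq_iff_eq_add', ← hadd, hx]
    simp only [g, Fin.cons_zero, Fin.tail_cons, hρx, hx]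
  · intro u _
    refine funext fun j => Fin.cases (hρg u) (fun i => ?_) j
    simp [g, hLτ, hLe, Fin.tail]
  · exact continuous_pi fun j => Fin.cases hρ
      (fun i => (continuous_apply i).comp L.continuous_of_finiteDimensional) j
  · exact hcont.add (((continuous_apply 0).sub (hρ.comp hcont)).smul continuous_const)

end Charts

section Dimension

theorem dimH_image_of_convex_of_isOpen {E F : Type*} [NormedAddCommGroup E] [NormedSpace ℝ E]
    [NormedAddCommGroup F] [NormedSpace ℝ F] [FiniteDimensional ℝ F]
    (L : E →ₗ[ℝ] F) {U : Set E} (hconv : Convex ℝ U) (hopen : IsOpen U) (hne : U.Nonempty) :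
    dimH (L '' U) = Module.finrank ℝ (LinearMap.range L) := by
  have hspan : vectorSpan ℝ (L '' U) = LinearMap.range L := by
    have hmap := L.toAffineMap.map_vectorSpan (s := U)
    rw [← direction_affineSpan, hopen.affineSpan_eq_top hne, AffineSubspace.direction_top] at hmap
    simpa using hmap.symm
  rw [Real.Convex.dimH_eq_finrank_vectorSpan (hconv.linear_image L) (hne.image L), hspan]

theorem dimH_openCone {κ E : Type*} [Fintype κ] [NormedAddCommGroup E] [NormedSpace ℝ E]
    [FiniteDimensional ℝ E] (v : κ → E) :
    dimH (openCone ℝ v) = Module.finrank ℝ (Submodule.span ℝ (Set.range v)) := by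
  rw [openCone, dimH_image_of_convex_of_isOpen _ (convex_pi fun _ _ => convex_Ioi 0)
    (isOpen_set_pi Set.finite_univ fun _ _ => isOpen_Ioi) ⟨1, by simp⟩,
    Fintype.range_linearCombination]

theorem dimH_expNeg_image {ι : Type*} [Fintype ι] (S : Set (ι → ℝ)) :
    dimH (expNeg '' S) = dimH S := by
  have hexp : ContDiff ℝ 1 (expNeg (ι := ι)) :=
    contDiff_pi.2 fun i => (contDiff_apply ℝ ℝ i).neg.exp
  have hlog : ContDiffOn ℝ 1 (negLog (ι := ι)) (Set.univ.pi fun _ => Set.Ioi 0) :=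
    contDiffOn_pi.2 fun i => ((contDiff_apply ℝ ℝ i).contDiffOn.log fun x hx =>
      (hx i trivial).out.ne').neg
  refine le_antisymm (hexp.contDiffOn.dimH_image_le convex_univ S.subset_univ) ?_
  have h := isHomeoOn_expNeg_negLog ι
  calc dimH S = dimH (negLog '' (expNeg '' S)) := by
        rw [(h.invOn.1.mono S.subset_univ).image_image]
    _ ≤ dimH (expNeg '' S) := hlog.dimH_image_le (convex_pi fun _ _ => convex_Ioi 0)
        (h.mapsTo.mono_left S.subset_univ).image_subset

end Dimension

section SemialgebraicHomeomorphism

variable {ι κ : Type}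

/-- `S` and `T` are semialgebraically homeomorphic: there are mutually inverse continuous maps
between them, with semialgebraic graph. -/
def SemialgebraicallyHomeomorphic [Fintype ι] [Fintype κ] (S : Set (ι → ℝ)) (T : Set (κ → ℝ)) :
    Prop :=
  ∃ (f : (ι → ℝ) → (κ → ℝ)) (g : (κ → ℝ) → (ι → ℝ)),
    ContinuousOn f S ∧ ContinuousOn g T ∧ f '' S = T ∧ g '' T = S ∧
      (∀ x ∈ S, g (f x) = x) ∧ (∀ y ∈ T, f (g y) = y) ∧
      IsSemialgebraic {z : ι ⊕ κ → ℝ | z ∘ Sum.inl ∈ S ∧ z ∘ Sum.inr = f (z ∘ Sum.inl)}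

theorem IsHomeoOn.semialgebraicallyHomeomorphic [Fintype ι] [Fintype κ] {f : (ι → ℝ) → (κ → ℝ)}
    {g : (κ → ℝ) → (ι → ℝ)} {S : Set (ι → ℝ)} {T : Set (κ → ℝ)} (h : IsHomeoOn f g S T)
    (hgraph : IsSemialgebraic
      {z : ι ⊕ κ → ℝ | z ∘ Sum.inl ∈ S ∧ z ∘ Sum.inr = f (z ∘ Sum.inl)}) :
    SemialgebraicallyHomeomorphic S T :=
  ⟨f, g, h.continuousOn, h.continuousOn_symm, h.image_eq, h.symm.image_eq, h.invOn.1, h.invOn.2,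
    hgraph⟩

/-- The product of the open orthant and the open unit cube, where the graphs of the
homeomorphisms between sets of the form `expNeg '' K` and the cube live. -/
def orthantProdCube (ι κ : Type) : Set (ι ⊕ κ → ℝ) :=
  {z | (∀ i, 0 < z (Sum.inl i)) ∧ ∀ j, z (Sum.inr j) ∈ Set.Ioo (0 : ℝ) 1}

theorem isSemialgebraic_orthantProdCube [Fintype ι] [Fintype κ] :
    IsSemialgebraic (orthantProdCube ι κ) := by
  convert ((IsSemialgebraic.setOf_forall_pos (.univ : Finset ι) fun i => .X (Sum.inl i)).inter
    (.setOf_forall_pos (.univ : Finset κ) fun j => .X (Sum.inr j))).inter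
    (.setOf_forall_pos (.univ : Finset κ) fun j => 1 - .X (Sum.inr j)) using 1
  ext z
  simp [orthantProdCube, forall_and, and_assoc]

theorem negLog_mem_logRatio (i : ι) :
    (fun z => negLog (z ∘ Sum.inl) i) ∈ logRatio (orthantProdCube ι κ) := by
  have hlog : (fun z => Real.log (z (Sum.inl i))) ∈ logRatio (orthantProdCube ι κ) := by
    simpa using log_eval_mem_logRatio (.X (Sum.inl i)) fun z hz => by simpa using hz.1 i
  exact neg_mem hlog

theorem log_inr_mem_logRatio (j : κ) :
    (fun z => Real.log (z (Sum.inr j))) ∈ logRatio (orthantProdCube ι κ) := by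
  simpa using log_eval_mem_logRatio (.X (Sum.inr j)) fun z hz => by simpa using (hz.2 j).1

theorem logit_inr_mem_logRatio (j : κ) :
    (fun z => logit (z (Sum.inr j))) ∈ logRatio (orthantProdCube ι κ) := by
  have hlog : (fun z => Real.log (1 - z (Sum.inr j))) ∈ logRatio (orthantProdCube ι κ) := by
    simpa using log_eval_mem_logRatio (1 - .X (Sum.inr j)) fun z hz => by
      simpa using (hz.2 j).2
  exact sub_mem (log_inr_mem_logRatio j) hlog

theorem apply_negLog_mem_logRatio {φ : Module.Dual ℝ (ι → ℝ)} (hφ : φ ∈ integralForms ℝ ι) :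
    (fun z => φ (negLog (z ∘ Sum.inl))) ∈ logRatio (orthantProdCube ι κ) :=
  apply_comp_mem_of_mem_integralForms hφ negLog_mem_logRatio

variable [Fintype ι] [Fintype κ]

theorem semialgebraicallyHomeomorphic_expNeg_image {K : Set (ι → ℝ)} {q : (ι → ℝ) → κ → ℝ}
    {g : (κ → ℝ) → ι → ℝ} {I : κ → Set ℝ} {χ χ' : κ → ℝ → ℝ}
    (hq : IsHomeoOn q g K (Set.univ.pi I))
    (hχ : ∀ j, IsHomeoOn (χ j) (χ' j) (I j) (Set.Ioo 0 1))
    (hK : IsSemialgebraic {z ∈ orthantProdCube ι κ | negLog (z ∘ Sum.inl) ∈ K})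
    (hgraph : ∀ j, IsSemialgebraic
      {z ∈ orthantProdCube ι κ | χ' j (z (Sum.inr j)) = q (negLog (z ∘ Sum.inl)) j}) :
    SemialgebraicallyHomeomorphic (expNeg '' K) (Set.univ.pi fun _ : κ => Set.Ioo 0 1) := by
  have hexp := (isHomeoOn_expNeg_negLog ι).restrict K.subset_univ
  have hcube := IsHomeoOn.pi hχ
  have h := (hexp.symm.trans hq).trans hcube
  refine h.semialgebraicallyHomeomorphic ?_
  convert hK.sep_and (isSemialgebraic_orthantProdCube.sep_forall Finset.univ fun j _ => hgraph j)
    using 1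
  ext z
  constructor
  · rintro ⟨hzK, hz⟩
    have hzcube : z ∘ Sum.inr ∈ Set.univ.pi fun _ : κ => Set.Ioo (0 : ℝ) 1 := hz ▸ h.mapsTo hzK
    have hlog := hexp.mapsTo_symm hzK
    refine ⟨⟨fun i => ?_, fun j => hzcube j trivial⟩, hlog, fun j _ =>
      congrFun ((hcube.eq_iff (hq.mapsTo hlog) hzcube).1 hz) j⟩
    obtain ⟨x, -, hx⟩ := hzK
    exact (Real.exp_pos _).trans_eq (congrFun hx i)
  · rintro ⟨⟨hpos, hzcube⟩, hlog, hz⟩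
    refine ⟨⟨_, hlog, (isHomeoOn_expNeg_negLog ι).invOn.2 fun i _ => hpos i⟩, ?_⟩
    exact (hcube.eq_iff (hq.mapsTo hlog) fun j _ => hzcube j).2 <|
      funext fun j => hz j (Finset.mem_univ j)

end SemialgebraicHomeomorphism

section RationalCones

variable {ι κ : Type} {V : Submodule ℝ (ι → ℝ)} {Z N : Finset (Module.Dual ℝ (ι → ℝ))}
  {e : ι → ℝ} {φ : Module.Dual ℝ (ι → ℝ)}

theorem mul_apply_mem_logRatio (hφ : φ ∈ integralForms ℝ ι) (he : e ∈ integralVectors ℝ ι)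
    {D : Set (κ → ℝ)} {ψ : (κ → ℝ) → ℝ} (hψ : ψ ∈ logRatio D) :
    (fun z => ψ z * φ e) ∈ logRatio D := by
  obtain ⟨m, hm⟩ := exists_intCast_eq_apply hφ he
  simpa [← hm, mul_comm, Pi.smul_def] using zsmul_mem hψ m

variable [Fintype ι]

theorem isSemialgebraic_negLog_mem_submodule [Fintype κ] (hZ : ∀ φ ∈ Z, φ ∈ integralForms ℝ ι)
    (hV : (V : Set (ι → ℝ)) = {x | ∀ φ ∈ Z, φ x = 0}) :
    IsSemialgebraic {z ∈ orthantProdCube ι κ | negLog (z ∘ Sum.inl) ∈ V} := by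
  simp only [← SetLike.mem_coe, hV, Set.mem_ofPred_eq]
  exact isSemialgebraic_orthantProdCube.sep_forall Z fun φ hφ =>
    isSemialgebraic_orthantProdCube.sep_eq (apply_negLog_mem_logRatio (hZ φ hφ))
      (zero_mem _)

theorem isSemialgebraic_negLog_mem_cone [Fintype κ] (hZ : ∀ φ ∈ Z, φ ∈ integralForms ℝ ι)
    (hV : (V : Set (ι → ℝ)) = {x | ∀ φ ∈ Z, φ x = 0}) (hN : ∀ φ ∈ N, φ ∈ integralForms ℝ ι) :
    IsSemialgebraic
      {z ∈ orthantProdCube ι κ | negLog (z ∘ Sum.inl) ∈ {x ∈ V | ∀ φ ∈ N, 0 < φ x}} :=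
  (isSemialgebraic_negLog_mem_submodule hZ hV).sep_and <|
    isSemialgebraic_orthantProdCube.sep_forall N fun φ hφ =>
      isSemialgebraic_orthantProdCube.sep_lt (zero_mem _)
        (apply_negLog_mem_logRatio (hN φ hφ))

theorem isSemialgebraic_eq_coneDepth_negLog [Fintype κ] (hN : ∀ φ ∈ N, φ ∈ integralForms ℝ ι)
    (hNe : N.Nonempty) (he : e ∈ integralVectors ℝ ι) (hpos : ∀ φ ∈ N, 0 < φ e)
    {ψ : (ι ⊕ κ → ℝ) → ℝ} (hψ : ψ ∈ logRatio (orthantProdCube ι κ)) :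
    IsSemialgebraic
      {z ∈ orthantProdCube ι κ | ψ z = coneDepth hNe e (negLog (z ∘ Sum.inl))} := by
  have hD := isSemialgebraic_orthantProdCube (ι := ι) (κ := κ)
  simp only [eq_coneDepth_iff hNe hpos]
  exact (hD.sep_forall N fun φ hφ => hD.sep_le (mul_apply_mem_logRatio (hN φ hφ) he hψ)
    (apply_negLog_mem_logRatio (hN φ hφ))).sep_and <|
    hD.sep_exists N fun φ hφ => hD.sep_eq (mul_apply_mem_logRatio (hN φ hφ) he hψ)
      (apply_negLog_mem_logRatio (hN φ hφ))

theorem semialgebraicallyHomeomorphic_expNeg_submodule {k : ℕ}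
    (hZ : ∀ φ ∈ Z, φ ∈ integralForms ℝ ι) (hV : (V : Set (ι → ℝ)) = {x | ∀ φ ∈ Z, φ x = 0})
    (hk : Module.finrank ℝ V = k) :
    SemialgebraicallyHomeomorphic (expNeg '' (V : Set (ι → ℝ))) (openUnitCube k) := by
  obtain ⟨m, p, hp, hm, hsurj, hker⟩ :=
    exists_integralForms_pi_surjective_ker_eq_span_singleton (V := V) (e := 0) (zero_mem _)
  rw [Submodule.span_zero_singleton] at hm hker
  obtain rfl : m = k := by simpa [hk] using hm
  obtain ⟨g, hg⟩ := exists_isHomeoOn_of_ker_eq_bot hsurj hker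
  rw [← Set.pi_univ Set.univ] at hg
  exact semialgebraicallyHomeomorphic_expNeg_image hg (fun _ => isHomeoOn_sigmoid_logit)
    (isSemialgebraic_negLog_mem_submodule hZ hV) fun j =>
      isSemialgebraic_orthantProdCube.sep_eq (logit_inr_mem_logRatio j)
        (apply_negLog_mem_logRatio (hp j))

theorem semialgebraicallyHomeomorphic_expNeg_cone {k : ℕ}
    (hZ : ∀ φ ∈ Z, φ ∈ integralForms ℝ ι) (hV : (V : Set (ι → ℝ)) = {x | ∀ φ ∈ Z, φ x = 0})
    (hN : ∀ φ ∈ N, φ ∈ integralForms ℝ ι) (hNe : N.Nonempty) (he : e ∈ integralVectors ℝ ι)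
    (heV : e ∈ V) (hpos : ∀ φ ∈ N, 0 < φ e) (hk : Module.finrank ℝ V = k) :
    SemialgebraicallyHomeomorphic (expNeg '' {x ∈ V | ∀ φ ∈ N, 0 < φ x}) (openUnitCube k) := by
  obtain ⟨m, p, hp, hm, hsurj, hker⟩ :=
    exists_integralForms_pi_surjective_ker_eq_span_singleton (e := (⟨e, heV⟩ : V)) he
  have he₀ : (⟨e, heV⟩ : V) ≠ 0 := by
    obtain ⟨φ, hφ⟩ := hNe
    rintro h
    have : e = 0 := congrArg Subtype.val h
    simpa [this] using hpos φ hφ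
  obtain rfl : m + 1 = k := by rwa [finrank_span_singleton he₀, hk] at hm
  obtain ⟨g, hg⟩ := exists_isHomeoOn_cons hsurj hker (continuous_coneDepth hNe)
    (coneDepth_add_smul hNe hpos)
  simp only [coneDepth_pos_iff hNe hpos] at hg
  refine semialgebraicallyHomeomorphic_expNeg_image
    (χ := Fin.cons (fun r => Real.exp (-r)) fun _ => Real.sigmoid)
    (χ' := Fin.cons (fun w => -Real.log w) fun _ => logit) hg
    (Fin.cases isHomeoOn_exp_neg_Ioi fun _ => isHomeoOn_sigmoid_logit)
    (isSemialgebraic_negLog_mem_cone hZ hV hN) (Fin.cases ?_ fun j => ?_)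
  · exact isSemialgebraic_eq_coneDepth_negLog hN hNe he hpos (neg_mem (log_inr_mem_logRatio 0))
  · exact isSemialgebraic_orthantProdCube.sep_eq (logit_inr_mem_logRatio j.succ)
      (apply_negLog_mem_logRatio (hp j))

theorem semialgebraicallyHomeomorphic_expNeg_openCone {κ : Type*} [Fintype κ] {v : κ → ι → ℝ}
    (hv : ∀ j, v j ∈ integralVectors ℝ ι) {k : ℕ}
    (hk : Module.finrank ℝ (Submodule.span ℝ (Set.range v)) = k) :
    SemialgebraicallyHomeomorphic (expNeg '' openCone ℝ v) (openUnitCube k) := by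
  obtain ⟨Z, N, hZ, hN, hpos, hspan, hcone⟩ := exists_integralForms_span_eq_openCone_eq hv
  rw [hcone]
  rcases N.eq_empty_or_nonempty with rfl | hNe
  · simpa using semialgebraicallyHomeomorphic_expNeg_submodule hZ hspan hk
  · exact semialgebraicallyHomeomorphic_expNeg_cone hZ hspan hN hNe
      (sum_mem fun j _ => hv j)
      (Submodule.sum_mem _ fun j _ => Submodule.subset_span ⟨j, rfl⟩) hpos hk

end RationalCones

section ToricCubes

variable {d n k : ℕ}

/-- The monomial map `f_A` for integer, possibly negative, exponents. -/
noncomputable def laurentMap (a : Fin n → Fin d → ℤ) (t : Fin d → ℝ) : Fin n → ℝ :=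
  fun i => ∏ j, t j ^ a i j

theorem monomialMap_eq_laurentMap (a : Fin n → Fin d → ℕ) :
    monomialMap a = laurentMap fun i j => (a i j : ℤ) := by
  ext t i
  simp only [monomialMap, laurentMap, zpow_natCast]

theorem laurentMap_expNeg (a : Fin n → Fin d → ℤ) (x : Fin d → ℝ) :
    laurentMap a (expNeg x) =
      expNeg (Fintype.linearCombination ℝ (fun j i => (a i j : ℝ)) x) := by
  ext i
  simp [laurentMap, expNeg, Fintype.linearCombination_apply, ← Real.rpow_intCast, ← Real.exp_mul,
    ← Real.exp_sum]

theorem laurentMap_image_openUnitCube (a : Fin n → Fin d → ℤ) :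
    laurentMap a '' openUnitCube d = expNeg '' openCone ℝ fun j i => (a i j : ℝ) := by
  rw [← expNeg_image_pi_Ioi, openCone, Set.image_image, Set.image_image]
  simp only [laurentMap_expNeg]

theorem openToricCube_homeo_openCube_general (a : Fin n → Fin d → ℤ)
    (hdim : dimH (laurentMap a '' openUnitCube d) = k) :
    SemialgebraicallyHomeomorphic (laurentMap a '' openUnitCube d) (openUnitCube k) := by
  rw [laurentMap_image_openUnitCube] at hdim ⊢
  rw [dimH_expNeg_image, dimH_openCone] at hdim
  exact semialgebraicallyHomeomorphic_expNeg_openCone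
    (fun j => mem_integralVectors.2 fun i => ⟨a i j, rfl⟩) (by exact_mod_cast hdim)

end ToricCubes

/-- An open toric cube `C = f_A((0,1)^d)` of dimension `k` is semialgebraically
homeomorphic to the open cube `(0,1)^k`: there are mutually inverse continuous maps
between `C` and `(0,1)^k`, whose graph is a semialgebraic set. -/
theorem openToricCube_homeo_openCube {d n k : ℕ} (a : Fin n → Fin d → ℕ)
    (hdim : dimH (monomialMap a '' openUnitCube d) = k) :
    ∃ (f : (Fin n → ℝ) → (Fin k → ℝ)) (g : (Fin k → ℝ) → (Fin n → ℝ)),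
      ContinuousOn f (monomialMap a '' openUnitCube d) ∧
      ContinuousOn g (openUnitCube k) ∧
      f '' (monomialMap a '' openUnitCube d) = openUnitCube k ∧
      g '' openUnitCube k = monomialMap a '' openUnitCube d ∧
      (∀ x ∈ monomialMap a '' openUnitCube d, g (f x) = x) ∧
      (∀ y ∈ openUnitCube k, f (g y) = y) ∧
      IsSemialgebraic {z : (Fin n ⊕ Fin k) → ℝ |
        (fun i => z (Sum.inl i)) ∈ monomialMap a '' openUnitCube d ∧
        (fun j => z (Sum.inr j)) = f (fun i => z (Sum.inl i))} := by
  rw [monomialMap_eq_laurentMap] at hdim ⊢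
  exact openToricCube_homeo_openCube_general _ hdim
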